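/- arXiv:1402.4561 — 3 statements merged into one kernel-verified Lean document; each statement's English description precedes it below -/
import Mathlib

section
/- Let α ∈ (0,1) and μ ∈ (1/2, 1) with μ ≥ (1/2)·[1 + √((1-α)(4/π - 1))]. Then for all a, b > 0 with a ≠ b, one has α·A(a,b) + (1-α)·T(a,b) < C(μa+(1-μ)b, μb+(1-μ)a). -/
/-!
Both sides are compared on the scale of the gap `C - A`. Since
`C(μa + (1-μ)b, μb + (1-μ)a) = A + (2μ-1)² (C - A)`, the claim reduces to the sharp inequality
`T - A < (4/π - 1) (C - A)`, that is, by homogeneity, to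
`T(1 + t, 1 - t) < 1 + (4/π - 1) t²` for `0 < |t| < 1`.

Doubling the angle turns `T(1 + t, 1 - t)` into the mean distance from `-t` to the points `e^{iβ}`
of the unit circle. Parametrizing the circle by the direction `θ` in which it is seen from `-t`
(Landen's substitution) and integrating by parts gives, with `Δ(θ) = √(1 - t² sin² θ)`,
`T(1 + t, 1 - t) = 1 + (2/π) t² ∫₀^{π/2} cos² θ / (1 + Δ(θ)) dθ`.
Because `Δ > cos` on `(0, π/2)`, this integral is strictly smaller than
`∫₀^{π/2} cos² θ / (1 + cos θ) dθ = 2 - π/2`, its value for `t = 1`.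
-/

open Real

/-- The contraharmonic mean of two positive reals. -/
noncomputable def contraMean (a b : ℝ) : ℝ := (a ^ 2 + b ^ 2) / (a + b)

/-- The arithmetic mean of two reals. -/
noncomputable def arithMean (a b : ℝ) : ℝ := (a + b) / 2

/-- The Toader mean of two positive reals. -/
noncomputable def toaderMean (a b : ℝ) : ℝ :=
  (2 / π) * ∫ θ in (0 : ℝ)..(π / 2), Real.sqrt (a ^ 2 * cos θ ^ 2 + b ^ 2 * sin θ ^ 2)

lemma intervalIntegral_eq_two_mul_of_comp_sub_left {f : ℝ → ℝ} (hf : Continuous f) {c : ℝ}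
    (hsymm : ∀ x, f (c - x) = f x) :
    ∫ x in (0 : ℝ)..c, f x = 2 * ∫ x in (0 : ℝ)..(c / 2), f x := by
  have hreflect : ∫ x in (c / 2)..c, f x = ∫ x in (0 : ℝ)..(c / 2), f x := by
    simpa only [hsymm, sub_half, sub_zero] using
      (intervalIntegral.integral_comp_sub_left (a := 0) (b := c / 2) f c).symm
  rw [← intervalIntegral.integral_add_adjacent_intervals (hf.intervalIntegrable 0 (c / 2))
    (hf.intervalIntegrable (c / 2) c), hreflect, two_mul]

/-- The radical `Δ(θ) = √(1 - t² sin² θ)` of the elliptic integrals with modulus `t`. -/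
noncomputable def ellipticDelta (t θ : ℝ) : ℝ := √(1 - t ^ 2 * sin θ ^ 2)

section EllipticDelta

variable {t : ℝ}

lemma ellipticDelta_nonneg (t θ : ℝ) : 0 ≤ ellipticDelta t θ := Real.sqrt_nonneg _

lemma ellipticDelta_pi_sub (t θ : ℝ) : ellipticDelta t (π - θ) = ellipticDelta t θ := by
  simp only [ellipticDelta, sin_pi_sub]

@[fun_prop]
lemma continuous_ellipticDelta (t : ℝ) : Continuous (ellipticDelta t) := by
  unfold ellipticDelta
  fun_prop

lemma one_sub_sq_mul_sin_sq_pos (ht : t ^ 2 < 1) (θ : ℝ) : 0 < 1 - t ^ 2 * sin θ ^ 2 := by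
  nlinarith [sin_sq_le_one θ, sq_nonneg t]

lemma ellipticDelta_pos (ht : t ^ 2 < 1) (θ : ℝ) : 0 < ellipticDelta t θ :=
  Real.sqrt_pos.2 (one_sub_sq_mul_sin_sq_pos ht θ)

lemma ellipticDelta_sq (ht : t ^ 2 < 1) (θ : ℝ) :
    ellipticDelta t θ ^ 2 = 1 - t ^ 2 * sin θ ^ 2 :=
  Real.sq_sqrt (one_sub_sq_mul_sin_sq_pos ht θ).le

lemma abs_mul_cos_lt_ellipticDelta (ht : t ^ 2 < 1) (θ : ℝ) :
    |t * cos θ| < ellipticDelta t θ :=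
  Real.lt_sqrt_of_sq_lt <| by
    rw [sq_abs]
    linear_combination ht + t ^ 2 * sin_sq_add_cos_sq θ

lemma abs_cos_lt_ellipticDelta (ht : t ^ 2 < 1) {θ : ℝ} (hθ : sin θ ≠ 0) :
    |cos θ| < ellipticDelta t θ :=
  Real.lt_sqrt_of_sq_lt <| by
    have h : t ^ 2 * sin θ ^ 2 < 1 * sin θ ^ 2 := by gcongr
    rw [sq_abs]
    linear_combination h + sin_sq_add_cos_sq θ

lemma hasDerivAt_ellipticDelta (ht : t ^ 2 < 1) (θ : ℝ) :
    HasDerivAt (ellipticDelta t) (-(t ^ 2 * sin θ * cos θ) / ellipticDelta t θ) θ := by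
  have h := ((((hasDerivAt_sin θ).fun_pow 2).const_mul (t ^ 2)).const_sub 1).sqrt
    (one_sub_sq_mul_sin_sq_pos ht θ).ne'
  refine HasDerivAt.congr_deriv (f := ellipticDelta t) h ?_
  rw [← ellipticDelta]
  have hΔ := (ellipticDelta_pos ht θ).ne'
  field_simp
  push_cast
  ring

end EllipticDelta

section Landen

/-- Landen's angle: for `|t| < 1`, the argument `β` of the point `e^{iβ}` of the unit circle that is
seen from `-t` in the direction `θ`. The distance from `-t` to that point is `t cos θ + Δ(θ)`. -/
noncomputable def landenAngle (t θ : ℝ) : ℝ := θ + arcsin (t * sin θ)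

variable {t : ℝ}

lemma abs_mul_sin_lt_one (ht : t ^ 2 < 1) (θ : ℝ) : |t * sin θ| < 1 := by
  rw [← sq_lt_one_iff_abs_lt_one, mul_pow]
  linarith [one_sub_sq_mul_sin_sq_pos ht θ]

lemma cos_landenAngle (ht : t ^ 2 < 1) (θ : ℝ) :
    cos (landenAngle t θ) = cos θ * ellipticDelta t θ - t * sin θ ^ 2 := by
  have hsin := abs_le.1 (abs_mul_sin_lt_one ht θ).le
  rw [landenAngle, cos_add, sin_arcsin hsin.1 hsin.2, cos_arcsin, mul_pow, ← ellipticDelta]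
  ring

lemma sqrt_one_add_sq_add_two_mul_cos_landenAngle (ht : t ^ 2 < 1) (θ : ℝ) :
    √(1 + t ^ 2 + 2 * t * cos (landenAngle t θ)) = t * cos θ + ellipticDelta t θ := by
  have hnonneg : 0 ≤ t * cos θ + ellipticDelta t θ := by
    linarith [neg_abs_le (t * cos θ), abs_mul_cos_lt_ellipticDelta ht θ]
  have hsq : 1 + t ^ 2 + 2 * t * cos (landenAngle t θ) = (t * cos θ + ellipticDelta t θ) ^ 2 := by
    rw [cos_landenAngle ht]
    linear_combination -ellipticDelta_sq ht θ - t ^ 2 * sin_sq_add_cos_sq θ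
  rw [hsq, Real.sqrt_sq hnonneg]

lemma hasDerivAt_landenAngle (ht : t ^ 2 < 1) (θ : ℝ) :
    HasDerivAt (landenAngle t) ((t * cos θ + ellipticDelta t θ) / ellipticDelta t θ) θ := by
  have hsin := abs_lt.1 (abs_mul_sin_lt_one ht θ)
  have h := (hasDerivAt_id θ).add
    ((hasDerivAt_arcsin hsin.1.ne' hsin.2.ne).comp θ ((hasDerivAt_sin θ).const_mul t))
  refine HasDerivAt.congr_deriv (f := landenAngle t) h ?_
  rw [mul_pow, ← ellipticDelta]
  have hΔ := (ellipticDelta_pos ht θ).ne'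
  field_simp
  ring

lemma continuous_add_div_ellipticDelta (ht : t ^ 2 < 1) :
    Continuous fun θ => (t * cos θ + ellipticDelta t θ) / ellipticDelta t θ := by
  fun_prop (disch := exact fun θ => (ellipticDelta_pos ht θ).ne')

lemma integral_sqrt_one_add_sq_add_two_mul_cos_eq_landen (ht : t ^ 2 < 1) :
    ∫ β in (0 : ℝ)..π, √(1 + t ^ 2 + 2 * t * cos β) =
      ∫ θ in (0 : ℝ)..π, (t * cos θ + ellipticDelta t θ) ^ 2 / ellipticDelta t θ := by
  have h := intervalIntegral.integral_comp_mul_deriv (a := 0) (b := π)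
    (g := fun β => √(1 + t ^ 2 + 2 * t * cos β)) (fun θ _ => hasDerivAt_landenAngle ht θ)
    (continuous_add_div_ellipticDelta ht).continuousOn (by fun_prop)
  have hzero : landenAngle t 0 = 0 := by simp [landenAngle]
  have hpi : landenAngle t π = π := by simp [landenAngle]
  simp only [Function.comp_apply, sqrt_one_add_sq_add_two_mul_cos_landenAngle ht, hzero, hpi,
    ← mul_div_assoc, ← sq] at h
  exact h.symm

lemma continuous_cos_sq_div_one_add_ellipticDelta (t : ℝ) :
    Continuous fun θ => cos θ ^ 2 / (1 + ellipticDelta t θ) := by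
  have hne (θ : ℝ) : 1 + ellipticDelta t θ ≠ 0 := by linarith [ellipticDelta_nonneg t θ]
  fun_prop (disch := exact hne)

-- The last summand is `cot θ (1 - Δ(θ))`, written so that it has no singularity at `sin θ = 0`.
lemma hasDerivAt_landen_primitive (ht : t ^ 2 < 1) (θ : ℝ) :
    HasDerivAt
      (fun θ => θ + 2 * t * sin θ + t ^ 2 * (sin θ * cos θ) / (1 + ellipticDelta t θ))
      ((t * cos θ + ellipticDelta t θ) ^ 2 / ellipticDelta t θ
        - t ^ 2 * (cos θ ^ 2 / (1 + ellipticDelta t θ))) θ := by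
  have hΔ := ellipticDelta_pos ht θ
  have hΔsq := ellipticDelta_sq ht θ
  have h := ((hasDerivAt_id' θ).fun_add ((hasDerivAt_sin θ).const_mul (2 * t))).fun_add
    ((((hasDerivAt_sin θ).fun_mul (hasDerivAt_cos θ)).const_mul (t ^ 2)).fun_div
      ((hasDerivAt_ellipticDelta ht θ).const_add 1) (by positivity))
  refine h.congr_deriv ?_
  generalize ellipticDelta t θ = Δ at *
  field_simp
  linear_combination (t ^ 2 * cos θ ^ 2 - Δ - Δ ^ 2) * hΔsq

lemma integral_landen (ht : t ^ 2 < 1) :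
    ∫ θ in (0 : ℝ)..π, (t * cos θ + ellipticDelta t θ) ^ 2 / ellipticDelta t θ =
      π + t ^ 2 * ∫ θ in (0 : ℝ)..π, cos θ ^ 2 / (1 + ellipticDelta t θ) := by
  have hcont : Continuous fun θ =>
      (t * cos θ + ellipticDelta t θ) ^ 2 / ellipticDelta t θ := by
    fun_prop (disch := exact fun θ => (ellipticDelta_pos ht θ).ne')
  have hcont' := (continuous_cos_sq_div_one_add_ellipticDelta t).const_mul (t ^ 2)
  have h := intervalIntegral.integral_eq_sub_of_hasDerivAt (a := 0) (b := π)
    (fun θ _ => hasDerivAt_landen_primitive ht θ) ((hcont.sub hcont').intervalIntegrable _ _)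
  rw [intervalIntegral.integral_sub (hcont.intervalIntegrable _ _)
    (hcont'.intervalIntegrable _ _), intervalIntegral.integral_const_mul] at h
  simp only [sin_zero, sin_pi, mul_zero, zero_mul, zero_div, add_zero, sub_zero] at h
  linarith

lemma integral_sqrt_one_add_sq_add_two_mul_cos (ht : t ^ 2 < 1) :
    ∫ β in (0 : ℝ)..π, √(1 + t ^ 2 + 2 * t * cos β) =
      π + 2 * t ^ 2 * ∫ θ in (0 : ℝ)..(π / 2), cos θ ^ 2 / (1 + ellipticDelta t θ) := by
  rw [integral_sqrt_one_add_sq_add_two_mul_cos_eq_landen ht, integral_landen ht,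
    intervalIntegral_eq_two_mul_of_comp_sub_left (continuous_cos_sq_div_one_add_ellipticDelta t)
      fun θ => by rw [cos_pi_sub, ellipticDelta_pi_sub, neg_sq]]
  ring

end Landen

lemma one_add_cos_pos {θ : ℝ} (h : θ ∈ Set.Icc 0 (π / 2)) : 0 < 1 + cos θ := by
  linarith [cos_nonneg_of_mem_Icc ⟨by linarith [h.1, pi_pos], h.2⟩]

lemma continuousOn_cos_sq_div_one_add_cos :
    ContinuousOn (fun θ => cos θ ^ 2 / (1 + cos θ)) (Set.Icc 0 (π / 2)) :=
  ContinuousOn.div (by fun_prop) (by fun_prop) fun _ hθ => (one_add_cos_pos hθ).ne'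

lemma integral_cos_sq_div_one_add_cos :
    ∫ θ in (0 : ℝ)..(π / 2), cos θ ^ 2 / (1 + cos θ) = 2 - π / 2 := by
  have hIcc : Set.uIcc 0 (π / 2) = Set.Icc 0 (π / 2) := Set.uIcc_of_le (by positivity)
  -- The term `sin θ / (1 + cos θ)` is `tan (θ / 2)`, an antiderivative of `1 / (1 + cos θ)`.
  have hderiv : ∀ θ ∈ Set.uIcc 0 (π / 2), HasDerivAt
      (fun θ => sin θ - θ + sin θ / (1 + cos θ)) (cos θ ^ 2 / (1 + cos θ)) θ := by
    intro θ hθ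
    have hpos := one_add_cos_pos (hIcc ▸ hθ)
    have h := ((hasDerivAt_sin θ).fun_sub (hasDerivAt_id' θ)).fun_add
      ((hasDerivAt_sin θ).fun_div ((hasDerivAt_cos θ).const_add 1) hpos.ne')
    refine h.congr_deriv ?_
    field_simp
    linear_combination sin_sq_add_cos_sq θ
  rw [intervalIntegral.integral_eq_sub_of_hasDerivAt hderiv
    (hIcc ▸ continuousOn_cos_sq_div_one_add_cos).intervalIntegrable]
  simp only [sin_pi_div_two, cos_pi_div_two, sin_zero, cos_zero]
  ring

lemma integral_cos_sq_div_one_add_ellipticDelta_lt {t : ℝ} (ht : t ^ 2 < 1) :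
    ∫ θ in (0 : ℝ)..(π / 2), cos θ ^ 2 / (1 + ellipticDelta t θ) < 2 - π / 2 := by
  have hpi := pi_pos
  have hlt : ∀ θ ∈ Set.Ioc 0 (π / 2), cos θ < ellipticDelta t θ := fun θ hθ =>
    (le_abs_self _).trans_lt <| abs_cos_lt_ellipticDelta ht
      (sin_pos_of_pos_of_lt_pi hθ.1 (by linarith [hθ.2])).ne'
  rw [← integral_cos_sq_div_one_add_cos]
  refine intervalIntegral.integral_lt_integral_of_continuousOn_of_le_of_exists_lt (by positivity)
    (continuous_cos_sq_div_one_add_ellipticDelta t).continuousOn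
    continuousOn_cos_sq_div_one_add_cos (fun θ hθ => ?_) ⟨π / 4, ⟨by linarith, by linarith⟩, ?_⟩
  · have := one_add_cos_pos (Set.Ioc_subset_Icc_self hθ)
    have := (hlt θ hθ).le
    gcongr
  · have : 0 < cos (π / 4) := cos_pos_of_mem_Ioo ⟨by linarith, by linarith⟩
    have := hlt (π / 4) ⟨by linarith, by linarith⟩
    gcongr

section Means

variable {a b : ℝ}

lemma contraMean_sub_arithMean (h : a + b ≠ 0) :
    contraMean a b - arithMean a b = (a - b) ^ 2 / (2 * (a + b)) := by
  unfold contraMean arithMean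
  field_simp
  ring

lemma arithMean_le_contraMean (h : 0 < a + b) : arithMean a b ≤ contraMean a b := by
  rw [← sub_nonneg, contraMean_sub_arithMean h.ne']
  positivity

lemma contraMean_mul_add_one_sub_mul (h : a + b ≠ 0) (μ : ℝ) :
    contraMean (μ * a + (1 - μ) * b) (μ * b + (1 - μ) * a) =
      arithMean a b + (2 * μ - 1) ^ 2 * (contraMean a b - arithMean a b) := by
  have hsum : μ * a + (1 - μ) * b + (μ * b + (1 - μ) * a) = a + b := by ring
  rw [contraMean_sub_arithMean h, contraMean, arithMean, hsum]
  field_simp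
  ring

lemma toaderMean_mul_mul {m : ℝ} (hm : 0 ≤ m) (a b : ℝ) :
    toaderMean (m * a) (m * b) = m * toaderMean a b := by
  have hsqrt (θ : ℝ) : √((m * a) ^ 2 * cos θ ^ 2 + (m * b) ^ 2 * sin θ ^ 2) =
      m * √(a ^ 2 * cos θ ^ 2 + b ^ 2 * sin θ ^ 2) := by
    rw [← Real.sqrt_sq hm, ← Real.sqrt_mul (sq_nonneg m), Real.sqrt_sq hm]
    ring_nf
  simp only [toaderMean, hsqrt, intervalIntegral.integral_const_mul]
  ring

lemma toaderMean_eq_integral_cos (a b : ℝ) :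
    toaderMean a b =
      1 / π * ∫ β in (0 : ℝ)..π, √((a ^ 2 + b ^ 2) / 2 + (a ^ 2 - b ^ 2) / 2 * cos β) := by
  have hdouble (θ : ℝ) : a ^ 2 * cos θ ^ 2 + b ^ 2 * sin θ ^ 2 =
      (a ^ 2 + b ^ 2) / 2 + (a ^ 2 - b ^ 2) / 2 * cos (2 * θ) := by
    rw [cos_two_mul, sin_sq]
    ring
  have hscale := intervalIntegral.integral_comp_mul_left (a := 0) (b := π / 2)
    (fun β => √((a ^ 2 + b ^ 2) / 2 + (a ^ 2 - b ^ 2) / 2 * cos β)) (two_ne_zero (α := ℝ))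
  rw [mul_zero, mul_div_cancel₀ π two_ne_zero, smul_eq_mul] at hscale
  simp only [toaderMean, hdouble, hscale]
  ring

lemma toaderMean_one_add_one_sub {t : ℝ} (ht : t ^ 2 < 1) :
    toaderMean (1 + t) (1 - t) =
      1 + 2 / π * t ^ 2 * ∫ θ in (0 : ℝ)..(π / 2), cos θ ^ 2 / (1 + ellipticDelta t θ) := by
  have hadd : ((1 + t) ^ 2 + (1 - t) ^ 2) / 2 = 1 + t ^ 2 := by ring
  have hsub : ((1 + t) ^ 2 - (1 - t) ^ 2) / 2 = 2 * t := by ring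
  rw [toaderMean_eq_integral_cos, hadd, hsub, integral_sqrt_one_add_sq_add_two_mul_cos ht]
  field_simp

lemma toaderMean_one_add_one_sub_lt {t : ℝ} (ht0 : t ≠ 0) (ht : t ^ 2 < 1) :
    toaderMean (1 + t) (1 - t) < 1 + (4 / π - 1) * t ^ 2 := by
  rw [toaderMean_one_add_one_sub ht]
  calc _ < 1 + 2 / π * t ^ 2 * (2 - π / 2) := by
        gcongr
        exact integral_cos_sq_div_one_add_ellipticDelta_lt ht
    _ = 1 + (4 / π - 1) * t ^ 2 := by
        field_simp
        ring

lemma toaderMean_sub_arithMean_lt (ha : 0 < a) (hb : 0 < b) (hab : a ≠ b) :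
    toaderMean a b - arithMean a b < (4 / π - 1) * (contraMean a b - arithMean a b) := by
  have hsum : 0 < a + b := by positivity
  set t := (a - b) / (a + b) with ht_def
  have ht0 : t ≠ 0 := div_ne_zero (sub_ne_zero.2 hab) hsum.ne'
  have ht : t ^ 2 < 1 := by
    rw [div_pow, div_lt_one (by positivity)]
    nlinarith [mul_pos ha hb]
  have hTA : toaderMean a b = arithMean a b * toaderMean (1 + t) (1 - t) := by
    rw [← toaderMean_mul_mul (by unfold arithMean; positivity), arithMean, ht_def]
    congr 1 <;> field_simp <;> ring
  have hCA : contraMean a b - arithMean a b = arithMean a b * t ^ 2 := by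
    rw [contraMean_sub_arithMean hsum.ne', arithMean, ht_def]
    field_simp
  have hA : 0 < arithMean a b := by unfold arithMean; positivity
  rw [hTA, hCA]
  linear_combination arithMean a b * toaderMean_one_add_one_sub_lt ht0 ht

end Means

theorem stmt2_general {α μ : ℝ} (hα : α < 1)
    (hμ : (1 - α) * (4 / π - 1) ≤ (2 * μ - 1) ^ 2)
    {a b : ℝ} (ha : 0 < a) (hb : 0 < b) (hab : a ≠ b) :
    α * arithMean a b + (1 - α) * toaderMean a b
      < contraMean (μ * a + (1 - μ) * b) (μ * b + (1 - μ) * a) := by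
  have hsum : 0 < a + b := by positivity
  have hgap : 0 ≤ contraMean a b - arithMean a b := sub_nonneg.2 (arithMean_le_contraMean hsum)
  calc α * arithMean a b + (1 - α) * toaderMean a b
      = arithMean a b + (1 - α) * (toaderMean a b - arithMean a b) := by ring
    _ < arithMean a b + (1 - α) * ((4 / π - 1) * (contraMean a b - arithMean a b)) :=
        (add_lt_add_iff_left _).2 <|
          mul_lt_mul_of_pos_left (toaderMean_sub_arithMean_lt ha hb hab) (sub_pos.2 hα)
    _ ≤ arithMean a b + (2 * μ - 1) ^ 2 * (contraMean a b - arithMean a b) := by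
        rw [← mul_assoc]
        gcongr
    _ = contraMean (μ * a + (1 - μ) * b) (μ * b + (1 - μ) * a) :=
        (contraMean_mul_add_one_sub_mul hsum.ne' μ).symm

theorem stmt2 (α μ : ℝ) (hα : α ∈ Set.Ioo (0 : ℝ) 1)
    (hμ : μ ∈ Set.Ioo (1 / 2 : ℝ) 1)
    (hμ' : μ ≥ 1 / 2 * (1 + Real.sqrt ((1 - α) * (4 / π - 1))))
    (a b : ℝ) (ha : 0 < a) (hb : 0 < b) (hab : a ≠ b) :
    α * arithMean a b + (1 - α) * toaderMean a b
      < contraMean (μ * a + (1 - μ) * b) (μ * b + (1 - μ) * a) :=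
  stmt2_general hα.2 ((Real.sqrt_le_left (by linarith [hμ.1])).1 (by linarith)) ha hb hab
end

section
/- For all r ∈ (0,1), writing r' = √(1−r²), one has the lower bound (π/2)·[(17 + 30r' + 17r'²)/(8(1+r')) − 3(1+r')/2] < E(r). -/
/-!
Put `s = √(1 - r²)` and `l = (1 - s) / (1 + s)`. Since
`1 - r² sin² θ = ((1 + s) / 2)² |1 + l e^{2iθ}|²`, the integral `E(r)` is `(π / 2) (1 + s) / 2`
times the average of `|1 + z| = |(1 + z)^{1/2}|²` over the circle `|z| = l`, while the lower bound
is `(π / 2) (1 + s) / 2` times `1 + l² / 4`. By Parseval the average is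
`∑ k, (1/2 choose k)² l^{2k}`, whose first two terms add up to `1 + l² / 4`; the third one,
`l⁴ / 64`, makes the inequality strict.

The Taylor coefficients are peeled off one at a time: a holomorphic `f` has circle average `f c`, so
`f c` and `f - f c` are orthogonal, and `|f - f c| = |R| |dslope f c|` on the circle, where
`dslope f c` is again holomorphic.
-/

open Real

/-- The complete elliptic integral of the second kind. -/
noncomputable def ellipticE (r : ℝ) : ℝ :=
  ∫ θ in (0 : ℝ)..(π / 2), Real.sqrt (1 - r ^ 2 * sin θ ^ 2)

open Function Metric Set

theorem circleAverage_norm_sq_eq_norm_circleAverage_sq_add {E : Type*} [NormedAddCommGroup E]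
    [InnerProductSpace ℝ E] [CompleteSpace E] {f : ℂ → E} {c : ℂ} {R : ℝ}
    (hf : CircleIntegrable f c R) (hf_sq : CircleIntegrable (fun z ↦ ‖f z‖ ^ 2) c R) :
    circleAverage (fun z ↦ ‖f z‖ ^ 2) c R =
      ‖circleAverage f c R‖ ^ 2 +
        circleAverage (fun z ↦ ‖f z - circleAverage f c R‖ ^ 2) c R := by
  set a := circleAverage f c R
  let L : E →L[ℝ] ℝ := (2 : ℝ) • innerSL ℝ a
  have hL_int : CircleIntegrable (fun z ↦ L (f z)) c R :=
    ⟨L.integrable_comp hf.1, L.integrable_comp hf.2⟩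
  have hsub_int : CircleIntegrable (fun z ↦ ‖f z‖ ^ 2 - L (f z)) c R :=
    CircleIntegrable.sub hf_sq hL_int
  have hL : circleAverage (fun z ↦ L (f z)) c R = 2 * ‖a‖ ^ 2 := by
    rw [← real_inner_self_eq_norm_sq]
    exact L.circleAverage_comp_comm hf
  have hexpand (z : ℂ) : ‖f z - a‖ ^ 2 = ‖f z‖ ^ 2 - L (f z) + ‖a‖ ^ 2 := by
    rw [norm_sub_sq_real, real_inner_comm]
    rfl
  simp only [hexpand]
  rw [circleAverage_fun_add hsub_int (circleIntegrable_const _ _ _),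
    circleAverage_fun_sub hf_sq hL_int, circleAverage_const, hL]
  ring

section Parseval

variable {E : Type*} [NormedAddCommGroup E] {f : ℂ → E} {c : ℂ} {R : ℝ}

theorem diffContOnCl_dslope_ball [NormedSpace ℂ E] [CompleteSpace E]
    (hf : DiffContOnCl ℂ f (ball c R)) : DiffContOnCl ℂ (dslope f c) (ball c R) := by
  rcases le_or_gt R 0 with hR | hR
  · rw [ball_eq_empty.2 hR]
    exact ⟨differentiableOn_empty, by simp⟩
  have hc : ball c R ∈ nhds c := ball_mem_nhds c hR
  exact ⟨(Complex.differentiableOn_dslope hc).2 hf.differentiableOn,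
    (continuousOn_dslope (Filter.mem_of_superset hc subset_closure)).2
      ⟨hf.continuousOn, hf.differentiableOn.differentiableAt hc⟩⟩

variable [InnerProductSpace ℂ E] [CompleteSpace E]

theorem circleAverage_norm_sq_eq_add_dslope (hf : DiffContOnCl ℂ f (ball c |R|)) :
    circleAverage (fun z ↦ ‖f z‖ ^ 2) c R =
      ‖f c‖ ^ 2 + R ^ 2 * circleAverage (fun z ↦ ‖dslope f c z‖ ^ 2) c R := by
  have hdslope : EqOn (fun z ↦ ‖f z - f c‖ ^ 2) (fun z ↦ R ^ 2 • ‖dslope f c z‖ ^ 2)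
      (sphere c |R|) := fun z hz ↦ by
    simp only [← sub_smul_dslope f c z, norm_smul, mem_sphere_iff_norm.1 hz, mul_pow, sq_abs,
      smul_eq_mul]
  have hf_sphere : ContinuousOn f (sphere c |R|) :=
    hf.continuousOn_ball.mono sphere_subset_closedBall
  let _ := InnerProductSpace.rclikeToReal ℂ E
  rw [circleAverage_norm_sq_eq_norm_circleAverage_sq_add hf_sphere.circleIntegrable'
    (hf_sphere.norm.pow 2).circleIntegrable', hf.circleAverage,
    circleAverage_congr_sphere hdslope, circleAverage_fun_smul, smul_eq_mul]

theorem circleAverage_norm_sq_eq_sum_add (hf : DiffContOnCl ℂ f (ball c |R|)) (n : ℕ) :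
    circleAverage (fun z ↦ ‖f z‖ ^ 2) c R =
      ∑ k ∈ Finset.range n, ‖(swap dslope c)^[k] f c‖ ^ 2 * R ^ (2 * k) +
        R ^ (2 * n) * circleAverage (fun z ↦ ‖(swap dslope c)^[n] f z‖ ^ 2) c R := by
  have hiter (k : ℕ) : DiffContOnCl ℂ ((swap dslope c)^[k] f) (ball c |R|) := by
    induction k with
    | zero => exact hf
    | succ k ih =>
      rw [iterate_succ_apply']
      exact diffContOnCl_dslope_ball ih
  induction n with
  | zero => simp
  | succ n ih =>
    rw [ih, circleAverage_norm_sq_eq_add_dslope (hiter n), Finset.sum_range_succ,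
      iterate_succ_apply']
    simp only [swap]
    ring

theorem sum_norm_coeff_sq_mul_pow_le_circleAverage {p : FormalMultilinearSeries ℂ ℂ E}
    (hf : DiffContOnCl ℂ f (ball c |R|)) (hp : HasFPowerSeriesAt f p c) (n : ℕ) :
    ∑ k ∈ Finset.range n, ‖p.coeff k‖ ^ 2 * R ^ (2 * k) ≤
      circleAverage (fun z ↦ ‖f z‖ ^ 2) c R := by
  have hcoeff (k : ℕ) : (swap dslope c)^[k] f c = p.coeff k := by
    rw [← (hp.has_fpower_series_iterate_dslope_fslope k).coeff_zero 1,
      ← FormalMultilinearSeries.coeff, FormalMultilinearSeries.coeff_iterate_fslope, zero_add]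
  rw [circleAverage_norm_sq_eq_sum_add hf n]
  simp only [hcoeff]
  have : 0 ≤ circleAverage (fun z ↦ ‖(swap dslope c)^[n] f z‖ ^ 2) c R :=
    circleAverage_nonneg_of_nonneg fun z _ ↦ by positivity
  rw [pow_mul]
  exact le_add_of_nonneg_right (by positivity)

end Parseval

theorem sum_norm_choose_sq_mul_pow_le_circleAverage (a : ℂ) {l : ℝ} (hl : |l| < 1) (n : ℕ) :
    ∑ k ∈ Finset.range n, ‖Ring.choose a k‖ ^ 2 * l ^ (2 * k) ≤
      circleAverage (fun z ↦ ‖(1 + z) ^ a‖ ^ 2) 0 l := by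
  have hdiff : DifferentiableOn ℂ (fun z : ℂ ↦ (1 + z) ^ a) (closedBall 0 |l|) := by
    intro z hz
    have hz1 : ‖z‖ < 1 := (mem_closedBall_zero_iff.1 hz).trans_lt hl
    exact ((differentiableAt_id.const_add 1).cpow_const
      (Complex.mem_slitPlane_of_norm_lt_one hz1)).differentiableWithinAt
  simpa [binomialSeries, FormalMultilinearSeries.coeff_ofScalars] using
    sum_norm_coeff_sq_mul_pow_le_circleAverage (hdiff.diffContOnCl_ball subset_rfl)
      Complex.one_add_cpow_hasFPowerSeriesAt_zero n

theorem le_circleAverage_norm_one_add {l : ℝ} (hl : |l| < 1) :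
    1 + l ^ 2 / 4 + l ^ 4 / 64 ≤ circleAverage (fun z ↦ ‖1 + z‖) 0 l := by
  have hsqrt (z : ℂ) : ‖(1 + z) ^ (2⁻¹ : ℂ)‖ ^ 2 = ‖1 + z‖ := by
    rw [← norm_pow]
    exact congrArg _ (Complex.cpow_nat_inv_pow (1 + z) two_ne_zero)
  have hchoose : Ring.choose (2⁻¹ : ℂ) 2 = -(1 / 8) := by
    rw [Ring.choose_eq_smul]
    norm_num [descPochhammer_succ_right, Polynomial.smeval_mul, Polynomial.smeval_sub]
  calc
    _ = ∑ k ∈ Finset.range 3, ‖Ring.choose (2⁻¹ : ℂ) k‖ ^ 2 * l ^ (2 * k) := by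
      simp only [Finset.sum_range_succ, Finset.sum_range_zero, Ring.choose_zero_right,
        Ring.choose_one_right, hchoose]
      norm_num
      ring
    _ ≤ _ := by
      simpa only [hsqrt] using sum_norm_choose_sq_mul_pow_le_circleAverage 2⁻¹ hl 3

theorem norm_one_add_circleMap (l φ : ℝ) :
    ‖1 + circleMap 0 l φ‖ = √(1 + l ^ 2 + 2 * l * cos φ) := by
  rw [Complex.norm_def]
  congr 1
  rw [circleMap_zero, Complex.exp_mul_I, ← Complex.ofReal_cos, ← Complex.ofReal_sin,
    Complex.normSq_apply]
  simp only [Complex.add_re, Complex.add_im, Complex.one_re, Complex.one_im, Complex.mul_re,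
    Complex.mul_im, Complex.ofReal_re, Complex.ofReal_im, Complex.I_re, Complex.I_im]
  linear_combination l ^ 2 * Real.sin_sq_add_cos_sq φ

theorem integral_comp_cos_zero_two_pi {E : Type*} [NormedAddCommGroup E] [NormedSpace ℝ E]
    {g : ℝ → E} (hg : Continuous g) :
    ∫ φ in (0 : ℝ)..(2 * π), g (cos φ) =
      (4 : ℝ) • ∫ θ in (0 : ℝ)..(π / 2), g (cos (2 * θ)) := by
  have hint (a b : ℝ) : IntervalIntegrable (fun φ ↦ g (cos φ)) MeasureTheory.volume a b :=
    (hg.comp continuous_cos).intervalIntegrable a b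
  have hreflect : ∫ φ in π..(2 * π), g (cos φ) = ∫ φ in (0 : ℝ)..π, g (cos φ) := by
    have h := intervalIntegral.integral_comp_sub_left (a := 0) (b := π) (fun φ ↦ g (cos φ)) (2 * π)
    simp only [cos_two_pi_sub, sub_zero] at h
    rw [h, two_mul, add_sub_cancel_right]
  rw [← intervalIntegral.integral_add_adjacent_intervals (hint 0 π) (hint π (2 * π)), hreflect,
    intervalIntegral.integral_comp_mul_left (fun φ ↦ g (cos φ)) two_ne_zero, mul_zero,
    mul_div_cancel₀ π two_ne_zero]
  module

section LandenModulus

variable {r s : ℝ}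

theorem sqrt_one_sub_sq_mul_sin_sq (hs : -1 < s) (hrs : r ^ 2 + s ^ 2 = 1) (θ : ℝ) :
    √(1 - r ^ 2 * sin θ ^ 2) =
      (1 + s) / 2 * √(1 + ((1 - s) / (1 + s)) ^ 2 + 2 * ((1 - s) / (1 + s)) * cos (2 * θ)) := by
  have hs' : 0 < 1 + s := by linarith
  rw [← Real.sqrt_sq (by positivity : 0 ≤ (1 + s) / 2), ← Real.sqrt_mul (sq_nonneg _),
    eq_sub_of_add_eq hrs, cos_two_mul, cos_sq']
  congr 1
  field_simp
  ring

theorem ellipticE_eq_circleAverage (hs : -1 < s) (hrs : r ^ 2 + s ^ 2 = 1) :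
    ellipticE r =
      π / 2 * ((1 + s) / 2 * circleAverage (fun z ↦ ‖1 + z‖) 0 ((1 - s) / (1 + s))) := by
  simp only [ellipticE, sqrt_one_sub_sq_mul_sin_sq hs hrs, circleAverage_def,
    norm_one_add_circleMap]
  rw [intervalIntegral.integral_const_mul]
  set l := (1 - s) / (1 + s)
  rw [integral_comp_cos_zero_two_pi (g := fun x ↦ √(1 + l ^ 2 + 2 * l * x)) (by fun_prop),
    smul_eq_mul, smul_eq_mul]
  field_simp
  ring

end LandenModulus

theorem stmt5 (r : ℝ) (hr : r ∈ Set.Ioo (0 : ℝ) 1) :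
    π / 2 * ((17 + 30 * Real.sqrt (1 - r ^ 2) + 17 * Real.sqrt (1 - r ^ 2) ^ 2) /
        (8 * (1 + Real.sqrt (1 - r ^ 2))) - 3 * (1 + Real.sqrt (1 - r ^ 2)) / 2)
      < ellipticE r := by
  obtain ⟨hr0, hr1⟩ := hr
  set s := √(1 - r ^ 2)
  have hs2 : s ^ 2 = 1 - r ^ 2 := Real.sq_sqrt (by nlinarith)
  have hs0 : 0 < s := Real.sqrt_pos.2 (by nlinarith)
  have hs1 : s < 1 := by nlinarith
  set l := (1 - s) / (1 + s) with hl
  have hl0 : 0 < l := div_pos (by linarith) (by linarith)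
  have hl1 : |l| < 1 := by
    rw [abs_of_pos hl0, hl, div_lt_one (by linarith)]
    linarith
  have hmean : 1 + l ^ 2 / 4 < circleAverage (fun z ↦ ‖1 + z‖) 0 l :=
    (lt_add_of_pos_right _ (by positivity)).trans_le (le_circleAverage_norm_one_add hl1)
  calc
    _ = π / 2 * ((1 + s) / 2 * (1 + l ^ 2 / 4)) := by
      rw [hl]
      field_simp
      ring
    _ < π / 2 * ((1 + s) / 2 * circleAverage (fun z ↦ ‖1 + z‖) 0 l) := by gcongr
    _ = ellipticE r := (ellipticE_eq_circleAverage (by linarith) (by linarith)).symm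
end

section
/- The function r ↦ 2E(r) − (1−r²)K(r) is strictly increasing on (0,1), and it maps (0,1) onto the interval (π/2, 2); in particular its limit as r → 0⁺ is π/2 and its limit as r → 1⁻ is 2. -/
open Real

/-- The complete elliptic integral of the first kind. -/
noncomputable def ellipticK (r : ℝ) : ℝ :=
  ∫ θ in (0 : ℝ)..(π / 2), (Real.sqrt (1 - r ^ 2 * sin θ ^ 2))⁻¹

/-!
Write `Δ = √(1 - r² sin² θ)`. The integrand `2 Δ - (1 - r²) / Δ` of `2 E(r) - (1 - r²) K(r)` is not
monotone in `r` pointwise, but it differs from `1 + r² cos² θ / (1 + Δ)` by the `θ`-derivative of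
`r² sin θ cos θ / (1 + Δ)`, which vanishes at `0` and `π / 2`. Hence

  `2 E(r) - (1 - r²) K(r) = ∫₀^{π/2} (1 + r² cos² θ / (1 + Δ)) dθ` for `0 ≤ r ≤ 1`,

and the integrand on the right is increasing in `r` and continuous up to and including `r = 1`.
-/

/-- The delta amplitude `Δ(θ, r)` of Legendre's normal form, as a function of the modulus `r` and
the amplitude `θ`. It is `0` where the radicand is negative, which happens only for `1 < |r|`. -/
noncomputable def deltaAmplitude (r θ : ℝ) : ℝ :=
  √(1 - r ^ 2 * sin θ ^ 2)

/-- The integrand of `regularIntegral`: it replaces `2 Δ - (1 - r²) / Δ` and, unlike it, has no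
singularity as `Δ → 0`. -/
noncomputable def regularIntegrand (r θ : ℝ) : ℝ :=
  1 + r ^ 2 * cos θ ^ 2 / (1 + deltaAmplitude r θ)

/-- The regularized form of `2 E(r) - (1 - r²) K(r)`: it agrees with that function for `|r| ≤ 1`
and is continuous on all of `ℝ`. -/
noncomputable def regularIntegral (r : ℝ) : ℝ :=
  ∫ θ in (0 : ℝ)..(π / 2), regularIntegrand r θ

lemma deltaAmplitude_nonneg (r θ : ℝ) : 0 ≤ deltaAmplitude r θ :=
  sqrt_nonneg _

lemma one_add_deltaAmplitude_pos (r θ : ℝ) : 0 < 1 + deltaAmplitude r θ :=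
  add_pos_of_pos_of_nonneg one_pos (deltaAmplitude_nonneg r θ)

lemma deltaAmplitude_pos {r θ : ℝ} (h : r ^ 2 * sin θ ^ 2 < 1) : 0 < deltaAmplitude r θ :=
  sqrt_pos.2 (sub_pos.2 h)

lemma sq_deltaAmplitude {r θ : ℝ} (h : r ^ 2 * sin θ ^ 2 ≤ 1) :
    deltaAmplitude r θ ^ 2 = 1 - r ^ 2 * sin θ ^ 2 :=
  sq_sqrt (sub_nonneg.2 h)

lemma deltaAmplitude_one (θ : ℝ) : deltaAmplitude 1 θ = |cos θ| := by
  rw [deltaAmplitude, one_pow, one_mul, abs_cos_eq_sqrt_one_sub_sin_sq]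

lemma deltaAmplitude_le_of_sq_le {r s : ℝ} (h : r ^ 2 ≤ s ^ 2) (θ : ℝ) :
    deltaAmplitude s θ ≤ deltaAmplitude r θ := by
  unfold deltaAmplitude
  gcongr

lemma continuous_uncurry_deltaAmplitude : Continuous (Function.uncurry deltaAmplitude) := by
  unfold deltaAmplitude Function.uncurry
  fun_prop

lemma continuous_deltaAmplitude (r : ℝ) : Continuous (deltaAmplitude r) :=
  continuous_uncurry_deltaAmplitude.uncurry_left r

lemma continuous_uncurry_regularIntegrand : Continuous (Function.uncurry regularIntegrand) :=
  continuous_const.add <|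
    Continuous.div (by fun_prop) (continuous_const.add continuous_uncurry_deltaAmplitude)
      fun p ↦ (one_add_deltaAmplitude_pos p.1 p.2).ne'

lemma continuous_regularIntegrand (r : ℝ) : Continuous (regularIntegrand r) :=
  continuous_uncurry_regularIntegrand.uncurry_left r

lemma hasDerivAt_deltaAmplitude {r θ : ℝ} (h : r ^ 2 * sin θ ^ 2 < 1) :
    HasDerivAt (deltaAmplitude r) (-(r ^ 2 * (sin θ * cos θ)) / deltaAmplitude r θ) θ := by
  have radicand : HasDerivAt (fun t ↦ 1 - r ^ 2 * sin t ^ 2)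
      (-(r ^ 2 * (2 * sin θ * cos θ))) θ := by
    simpa using (((hasDerivAt_sin θ).pow 2).const_mul (r ^ 2)).const_sub 1
  refine (radicand.sqrt (sub_pos.2 h).ne').congr_deriv ?_
  rw [← deltaAmplitude]
  ring

lemma hasDerivAt_boundaryTerm {r θ : ℝ} (h : r ^ 2 * sin θ ^ 2 < 1) :
    HasDerivAt (fun t ↦ r ^ 2 * (sin t * cos t) / (1 + deltaAmplitude r t))
      (2 * deltaAmplitude r θ - (1 - r ^ 2) * (deltaAmplitude r θ)⁻¹ - regularIntegrand r θ) θ := by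
  have numerator : HasDerivAt (fun t ↦ r ^ 2 * (sin t * cos t))
      (r ^ 2 * (cos θ * cos θ + sin θ * -sin θ)) θ :=
    ((hasDerivAt_sin θ).mul (hasDerivAt_cos θ)).const_mul (r ^ 2)
  have quotient := numerator.div ((hasDerivAt_deltaAmplitude h).const_add 1)
    (one_add_deltaAmplitude_pos r θ).ne'
  refine quotient.congr_deriv ?_
  have hΔ := (deltaAmplitude_pos h).ne'
  have hΔ_add := (one_add_deltaAmplitude_pos r θ).ne'
  have hΔ_sq := sq_deltaAmplitude h.le
  have hcos := cos_sq' θ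
  rw [regularIntegrand]
  field_simp
  grind

lemma intervalIntegrable_one_sub_sq_mul_inv_deltaAmplitude {r : ℝ} (hr : |r| ≤ 1) (a b : ℝ) :
    IntervalIntegrable (fun θ ↦ (1 - r ^ 2) * (deltaAmplitude r θ)⁻¹) MeasureTheory.volume a b := by
  rcases ((sq_le_one_iff_abs_le_one r).2 hr).eq_or_lt with h | h
  · simp [h]
  · have hΔ (θ : ℝ) : deltaAmplitude r θ ≠ 0 :=
      (deltaAmplitude_pos (mul_lt_one_of_nonneg_of_lt_one_left (sq_nonneg r) h
        (sin_sq_le_one θ))).ne'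
    exact (((continuous_deltaAmplitude r).inv₀ hΔ).const_mul _).intervalIntegrable a b

lemma two_mul_ellipticE_sub_eq_integral {r : ℝ} (hr : |r| ≤ 1) :
    2 * ellipticE r - (1 - r ^ 2) * ellipticK r =
      ∫ θ in (0 : ℝ)..(π / 2),
        (2 * deltaAmplitude r θ - (1 - r ^ 2) * (deltaAmplitude r θ)⁻¹) := by
  rw [intervalIntegral.integral_sub
    (((continuous_deltaAmplitude r).const_mul 2).intervalIntegrable _ _)
    (intervalIntegrable_one_sub_sq_mul_inv_deltaAmplitude hr _ _),
    intervalIntegral.integral_const_mul, intervalIntegral.integral_const_mul]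
  rfl

lemma sq_mul_sin_sq_lt_one {r θ : ℝ} (hr : |r| ≤ 1) (hθ : cos θ ≠ 0) :
    r ^ 2 * sin θ ^ 2 < 1 := by
  have hsin : sin θ ^ 2 < 1 := by
    rw [sin_sq]
    exact sub_lt_self 1 (by positivity)
  exact mul_lt_one_of_nonneg_of_lt_one_right ((sq_le_one_iff_abs_le_one r).2 hr) (sq_nonneg _) hsin

/- For `|r| = 1` the boundary term is not differentiable at `π / 2`, so the fundamental theorem of
calculus is applied with derivatives on the open interval only. The value `ellipticK 1` is junk, but
its coefficient vanishes. -/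
theorem two_mul_ellipticE_sub_eq_regularIntegral {r : ℝ} (hr : |r| ≤ 1) :
    2 * ellipticE r - (1 - r ^ 2) * ellipticK r = regularIntegral r := by
  have hint : IntervalIntegrable
      (fun θ ↦ 2 * deltaAmplitude r θ - (1 - r ^ 2) * (deltaAmplitude r θ)⁻¹)
      MeasureTheory.volume 0 (π / 2) :=
    (((continuous_deltaAmplitude r).const_mul 2).intervalIntegrable _ _).sub
      (intervalIntegrable_one_sub_sq_mul_inv_deltaAmplitude hr _ _)
  have hint_regular : IntervalIntegrable (regularIntegrand r) MeasureTheory.volume 0 (π / 2) :=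
    (continuous_regularIntegrand r).intervalIntegrable _ _
  have hcont : Continuous fun θ ↦ r ^ 2 * (sin θ * cos θ) / (1 + deltaAmplitude r θ) :=
    Continuous.div (by fun_prop) (continuous_const.add (continuous_deltaAmplitude r))
      fun θ ↦ (one_add_deltaAmplitude_pos r θ).ne'
  have hderiv (θ : ℝ) (hθ : θ ∈ Set.Ioo 0 (π / 2)) :=
    hasDerivAt_boundaryTerm (sq_mul_sin_sq_lt_one hr
      (cos_pos_of_mem_Ioo ⟨by linarith [hθ.1, pi_pos], hθ.2⟩).ne')
  have boundary_eq_zero := intervalIntegral.integral_eq_sub_of_hasDerivAt_of_le pi_div_two_pos.le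
    hcont.continuousOn hderiv (hint.sub hint_regular)
  rw [intervalIntegral.integral_sub hint hint_regular, cos_pi_div_two, sin_zero] at boundary_eq_zero
  rw [two_mul_ellipticE_sub_eq_integral hr, regularIntegral, ← sub_eq_zero, boundary_eq_zero]
  ring

lemma ellipticE_one : ellipticE 1 = 1 := by
  calc ellipticE 1 = ∫ θ in (0 : ℝ)..(π / 2), cos θ :=
        intervalIntegral.integral_congr fun θ hθ ↦ by
          rw [Set.uIcc_of_le pi_div_two_pos.le] at hθ
          exact (deltaAmplitude_one θ).trans <| abs_of_nonneg <|
            cos_nonneg_of_mem_Icc ⟨by linarith [hθ.1, pi_pos], hθ.2⟩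
    _ = 1 := by simp

lemma regularIntegral_zero : regularIntegral 0 = π / 2 := by
  simp [regularIntegral, regularIntegrand]

lemma regularIntegral_one : regularIntegral 1 = 2 := by
  rw [← two_mul_ellipticE_sub_eq_regularIntegral abs_one.le, ellipticE_one]
  ring

lemma continuous_regularIntegral : Continuous regularIntegral :=
  intervalIntegral.continuous_parametric_intervalIntegral_of_continuous'
    continuous_uncurry_regularIntegrand _ _

lemma regularIntegrand_le_of_sq_le {r s : ℝ} (h : r ^ 2 ≤ s ^ 2) (θ : ℝ) :
    regularIntegrand r θ ≤ regularIntegrand s θ := by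
  have := one_add_deltaAmplitude_pos s θ
  have := deltaAmplitude_le_of_sq_le h θ
  unfold regularIntegrand
  gcongr

lemma regularIntegrand_zero_right (r : ℝ) : regularIntegrand r 0 = 1 + r ^ 2 / 2 := by
  norm_num [regularIntegrand, deltaAmplitude]

theorem strictMonoOn_regularIntegral : StrictMonoOn regularIntegral (Set.Ici 0) := by
  intro r hr s _ hrs
  have hsq : r ^ 2 < s ^ 2 := pow_lt_pow_left₀ hrs hr two_ne_zero
  refine intervalIntegral.integral_lt_integral_of_continuousOn_of_le_of_exists_lt pi_div_two_pos
    (continuous_regularIntegrand r).continuousOn (continuous_regularIntegrand s).continuousOn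
    (fun θ _ ↦ regularIntegrand_le_of_sq_le hsq.le θ) ⟨0, ⟨le_rfl, pi_div_two_pos.le⟩, ?_⟩
  rw [regularIntegrand_zero_right, regularIntegrand_zero_right]
  gcongr

theorem stmt10 :
    StrictMonoOn (fun r : ℝ => 2 * ellipticE r - (1 - r ^ 2) * ellipticK r)
      (Set.Ioo (0 : ℝ) 1) ∧
    (fun r : ℝ => 2 * ellipticE r - (1 - r ^ 2) * ellipticK r) '' Set.Ioo (0 : ℝ) 1
      = Set.Ioo (π / 2) 2 ∧
    Filter.Tendsto (fun r : ℝ => 2 * ellipticE r - (1 - r ^ 2) * ellipticK r)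
      (nhdsWithin 0 (Set.Ioi 0)) (nhds (π / 2)) ∧
    Filter.Tendsto (fun r : ℝ => 2 * ellipticE r - (1 - r ^ 2) * ellipticK r)
      (nhdsWithin 1 (Set.Iio 1)) (nhds 2) := by
  have heq : Set.EqOn regularIntegral (fun r ↦ 2 * ellipticE r - (1 - r ^ 2) * ellipticK r)
      (Set.Ioo 0 1) := fun r hr ↦
    (two_mul_ellipticE_sub_eq_regularIntegral (abs_le.2 ⟨by linarith [hr.1], hr.2.le⟩)).symm
  have hmono : StrictMonoOn regularIntegral (Set.Icc 0 1) :=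
    strictMonoOn_regularIntegral.mono Set.Icc_subset_Ici_self
  have tendsto_zero : Filter.Tendsto regularIntegral (nhds 0) (nhds (π / 2)) :=
    regularIntegral_zero ▸ continuous_regularIntegral.tendsto 0
  have tendsto_one : Filter.Tendsto regularIntegral (nhds 1) (nhds 2) :=
    regularIntegral_one ▸ continuous_regularIntegral.tendsto 1
  refine ⟨(hmono.mono Set.Ioo_subset_Icc_self).congr heq, ?_, ?_, ?_⟩
  · rw [← heq.image_eq,
      continuous_regularIntegral.continuousOn.image_Ioo_of_strictMonoOn zero_le_one hmono,
      regularIntegral_zero, regularIntegral_one]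
  · exact (tendsto_zero.mono_left nhdsWithin_le_nhds).congr' <|
      heq.eventuallyEq_of_mem (Ioo_mem_nhdsGT one_pos)
  · exact (tendsto_one.mono_left nhdsWithin_le_nhds).congr' <|
      heq.eventuallyEq_of_mem (Ioo_mem_nhdsLT one_pos)
end
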